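/- Let I ⊆ S = ℂ[x_0,…,x_n] be a homogeneous ideal such that the Krull dimension of S/I equals d, and let w_1,…,w_d ∈ ℤ^{n+1} be linearly independent vectors, assembled as the rows of a d×(n+1) integer matrix W. Suppose there exists w ∈ ℝ^{n+1} such that J := init_w(I) satisfies init_{w_i}(J) = J for every 1 ≤ i ≤ d (i.e. J is homogeneous with respect to the ℤ^d-grading given by W), and suppose J is a prime ideal generated by binomials that contains no monomials. Let L = {ℓ ∈ ℤ^{n+1} : Wℓ = 0}, and for ℓ ∈ L write ℓ = ℓ⁺ − ℓ⁻ where ℓ⁺, ℓ⁻ ∈ ℕ^{n+1} are the positive and negative parts of ℓ. Then there exist nonzero constants c_ℓ ∈ ℂ for ℓ ∈ L such that J = ⟨x^{ℓ⁺} − c_ℓ x^{ℓ⁻} : ℓ ∈ L⟩. -/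

import Mathlib

open MvPolynomial

/-- The weight of a monomial exponent `u` with respect to a weight vector `w`. -/
noncomputable def wt {N : ℕ} (w : Fin N → ℝ) (u : Fin N →₀ ℕ) : ℝ :=
  ∑ i, w i * (u i : ℝ)

open Classical in
/-- The initial form of a polynomial `f` with respect to a weight vector `w`:
the sum of the terms whose weight is minimal among the terms of `f`. -/
noncomputable def initialForm {N : ℕ} (w : Fin N → ℝ) (f : MvPolynomial (Fin N) ℂ) :
    MvPolynomial (Fin N) ℂ :=
  ∑ u ∈ f.support, if ∀ v ∈ f.support, wt w u ≤ wt w v then monomial u (coeff u f) else 0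

/-- The initial ideal of `I` with respect to a weight vector `w`. -/
noncomputable def initialIdeal {N : ℕ} (w : Fin N → ℝ) (I : Ideal (MvPolynomial (Fin N) ℂ)) :
    Ideal (MvPolynomial (Fin N) ℂ) :=
  Ideal.span {g | ∃ f ∈ I, f ≠ 0 ∧ g = initialForm w f}

/-!
Let `M` be the lattice of exponent differences of the binomials in `J`. As `J` is generated by
binomials, it is homogeneous for the grading of `S` by `ℤ^N / M`; as it contains no monomial, each
of its nonzero elements has two terms of the same degree. Since `J` is homogeneous with respect to
`W`, the lattice `M` lies in `L = ker W`.

Choose variables whose degrees form a maximal independent family in `ℤ^N / M`. Distinct monomials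
in these variables have distinct degrees, so a nonzero polynomial `f` in them is not in `I`:
otherwise `init_w(f)` would be a nonzero element of `J` without two terms of the same degree. Hence
these variables are algebraically independent modulo `I`, and
`rank (ℤ^N / M) ≤ dim (S / I) = d = rank W = rank (ℤ^N / L)`.

Over an algebraically closed field, `a ^ n = c b ^ n` in the domain `S / J` forces `a` to be a
scalar multiple of `b`, so `ℤ^N / M` is torsion-free and the equality of ranks gives `M = L`.
-/

section LinearAlgebra

theorem exists_linearIndepOn_and_finrank_eq_card {R M ι : Type*} [CommRing R] [IsDomain R]
    [AddCommGroup M] [Module R M] [Module.Finite R M] {v : ι → M}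
    (hv : Submodule.span R (Set.range v) = ⊤) :
    ∃ s : Set ι, LinearIndepOn R v s ∧ Module.finrank R M = Nat.card s := by
  obtain ⟨s, hs, hmax⟩ := exists_maximal_linearIndepOn R v
  refine ⟨s, hs, ?_⟩
  have : Fintype s := @Fintype.ofFinite s hs.linearIndependent.finite
  set N := Submodule.span R (v '' s) with hN
  have htorsion : Module.IsTorsion R (M ⧸ N) := by
    suffices h : Submodule.span R (Set.range v) ≤
        (Submodule.torsion R (M ⧸ N)).comap N.mkQ by
      intro x
      obtain ⟨y, rfl⟩ := N.mkQ_surjective x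
      exact Submodule.mem_torsion_iff _ |>.1 (h (hv ▸ Submodule.mem_top))
    rw [Submodule.span_le]
    rintro _ ⟨i, rfl⟩
    by_cases hi : i ∈ s
    · have hvi : N.mkQ (v i) = 0 :=
        (Submodule.Quotient.mk_eq_zero N).2 (Submodule.subset_span ⟨i, hi, rfl⟩)
      rw [SetLike.mem_coe, Submodule.mem_comap, hvi]
      exact zero_mem _
    · obtain ⟨a, ha, hai⟩ := hmax i hi
      exact ⟨⟨a, mem_nonZeroDivisors_of_ne_zero ha⟩, (Submodule.Quotient.mk_eq_zero N).2 hai⟩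
  rw [← N.finrank_quotient_add_finrank, Module.finrank_eq_zero_iff_isTorsion.2 htorsion, zero_add,
    hN, Set.image_eq_range, finrank_span_eq_card hs, Nat.card_eq_fintype_card]

theorem card_le_rank_of_linearIndependent_row {R m n : Type*} [CommRing R] [LinearOrder R]
    [IsStrictOrderedRing R] [Fintype m] [Fintype n] {A : Matrix m n R}
    (hA : LinearIndependent R A.row) : Fintype.card m ≤ A.rank := by
  classical
  have hgram : (A * A.transpose).det ≠ 0 := by
    intro h
    obtain ⟨v, hv0, hv⟩ := Matrix.exists_vecMul_eq_zero_iff.2 h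
    have hself : Matrix.vecMul v A ⬝ᵥ Matrix.vecMul v A = 0 := by
      rw [← Matrix.mulVec_transpose, Matrix.dotProduct_mulVec, Matrix.mulVec_transpose,
        Matrix.vecMul_vecMul, hv, zero_dotProduct]
    refine hv0 (Matrix.vecMul_injective_iff.2 hA ?_)
    simpa using dotProduct_self_eq_zero.1 hself
  rw [← Matrix.rank_of_det_ne_zero hgram]
  exact Matrix.rank_mul_le_left A A.transpose

theorem ker_eq_of_finrank_quotient_le {R M M' : Type*} [CommRing R] [IsDomain R]
    [AddCommGroup M] [Module R M] [AddCommGroup M'] [Module R M'] [Module.Finite R M]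
    {N : Submodule R M} [Module.IsTorsionFree R (M ⧸ N)] {φ : M →ₗ[R] M'}
    (hN : N ≤ LinearMap.ker φ)
    (h : Module.finrank R (M ⧸ N) ≤ Module.finrank R (LinearMap.range φ)) :
    LinearMap.ker φ = N := by
  refine le_antisymm ?_ hN
  have hdisj : Disjoint ⊤ (LinearMap.ker (N.liftQ φ hN)) := by
    refine Submodule.disjoint_ker_of_finrank_le _ ?_
    rwa [finrank_top, ← LinearMap.range_eq_map, Submodule.range_liftQ]
  rwa [top_disjoint, Submodule.ker_liftQ, ← le_bot_iff, Submodule.map_le_iff_le_comap,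
    Submodule.comap_bot, Submodule.ker_mkQ] at hdisj

theorem injective_weight_of_linearIndepOn {σ M : Type*} [AddCommGroup M] {v : σ → M} {s : Set σ}
    (hs : LinearIndepOn ℤ v s) :
    Function.Injective fun u : s →₀ ℕ => Finsupp.weight v (u.mapDomain (↑)) := by
  have hnat : LinearIndependent ℕ fun i : s => v i :=
    LinearIndependent.restrict_scalars (K := ℤ) (by
      simpa using Nat.cast_injective (R := ℤ)) hs
  simp_rw [Finsupp.weight, LinearMap.toAddMonoidHom_coe, Finsupp.linearCombination_mapDomain ℕ]
  exact hnat

end LinearAlgebra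

section KrullDimension

theorem ringKrullDim_le_of_injective_of_isIntegral {A B : Type*} [CommRing A] [CommRing B]
    {f : A →+* B} (hf : Function.Injective f) (hint : f.IsIntegral) :
    ringKrullDim A ≤ ringKrullDim B := by
  algebraize [f]
  have : Algebra.IsIntegral A B := ⟨hint⟩
  refine iSup_le fun l => ?_
  obtain ⟨Q, -, hQ, hQl⟩ := Ideal.exists_ideal_over_prime_of_isIntegral (S := B)
    l.head.asIdeal ⊥ (by simp [← RingHom.ker_eq_comap_bot, RingHom.algebraMap_toAlgebra,
      (RingHom.injective_iff_ker_eq_bot f).1 hf])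
  have : Q.LiesOver l.head.asIdeal := ⟨hQl.symm⟩
  obtain ⟨L, hL, -, -⟩ := Ideal.exists_ltSeries_of_hasGoingUp l Q
  exact hL ▸ Order.LTSeries.length_le_krullDim L

variable {k R κ : Type*} [Field k] [CommRing R] [Algebra k R] [Algebra.FiniteType k R]

theorem trdeg_le_ringKrullDim [IsDomain R] :
    ((Algebra.trdeg k R).toNat : WithBot ℕ∞) ≤ ringKrullDim R := by
  obtain ⟨s, g, hg, hint⟩ := exists_integral_inj_algHom_of_fg k R
  have hs : Algebra.trdeg k R = s := by
    algebraize [g.toRingHom]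
    have : Algebra.IsIntegral (MvPolynomial (Fin s) k) R := ⟨hint⟩
    have : FaithfulSMul (MvPolynomial (Fin s) k) R :=
      (faithfulSMul_iff_algebraMap_injective _ _).2 hg
    have : IsScalarTower k (MvPolynomial (Fin s) k) R := .of_algHom g
    simpa [trdeg_eq_zero, eq_comm] using
      lift_trdeg_add_eq k (MvPolynomial (Fin s) k) R
  have hdim := ringKrullDim_le_of_injective_of_isIntegral hg hint
  rwa [MvPolynomial.ringKrullDim_of_isNoetherianRing, ringKrullDim_eq_zero_of_field, zero_add,
    Nat.card_fin, ← Cardinal.toNat_natCast s, ← hs] at hdim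

theorem card_le_ringKrullDim_of_injective {φ : MvPolynomial κ k →ₐ[k] R}
    (hφ : Function.Injective φ) : (Nat.card κ : WithBot ℕ∞) ≤ ringKrullDim R := by
  obtain ⟨P, hP, -, hdisj⟩ := Ideal.exists_le_prime_disjoint (⊥ : Ideal R)
    ((nonZeroDivisors (MvPolynomial κ k)).map φ) (by
      rw [Set.disjoint_left]
      rintro x hx ⟨y, hy, rfl⟩
      rw [SetLike.mem_coe, Ideal.mem_bot] at hx
      exact nonZeroDivisors.ne_zero hy (hφ (hx.trans (map_zero φ).symm)))
  have hinj : Function.Injective ((Ideal.Quotient.mkₐ k P).comp φ) := by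
    refine (injective_iff_map_eq_zero _).2 fun f hf => ?_
    by_contra hf0
    exact Set.disjoint_left.1 hdisj (Ideal.Quotient.eq_zero_iff_mem.1 hf)
      ⟨f, mem_nonZeroDivisors_of_ne_zero hf0, rfl⟩
  have hcard : Nat.card κ ≤ (Algebra.trdeg k (R ⧸ P)).toNat := by
    have htrdeg := lift_trdeg_le_of_injective _ hinj
    rw [MvPolynomial.trdeg_of_isDomain] at htrdeg
    simpa [Nat.card] using
      Cardinal.toNat_le_toNat htrdeg (by simpa using trdeg_lt_aleph0_of_finiteType)
  calc (Nat.card κ : WithBot ℕ∞) ≤ ((Algebra.trdeg k (R ⧸ P)).toNat : WithBot ℕ∞) :=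
        Nat.cast_le.2 hcard
    _ ≤ ringKrullDim (R ⧸ P) := trdeg_le_ringKrullDim
    _ ≤ ringKrullDim R := ringKrullDim_quotient_le P

end KrullDimension

section BinomialIdeals

variable {σ k : Type*} [Field k]

/-- An ideal generated by polynomials with at most two terms. -/
def IsBinomialIdeal (J : Ideal (MvPolynomial σ k)) : Prop :=
  ∃ S : Set (MvPolynomial σ k), J = Ideal.span S ∧ ∀ f ∈ S, f.support.card ≤ 2

/-- An ideal containing no monomial. -/
def IsMonomialFreeIdeal (J : Ideal (MvPolynomial σ k)) : Prop :=
  ∀ u : σ →₀ ℕ, monomial u (1 : k) ∉ J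

variable {J : Ideal (MvPolynomial σ k)}

theorem IsMonomialFreeIdeal.monomial_mem_iff (hJ : IsMonomialFreeIdeal J) {u : σ →₀ ℕ} {a : k} :
    monomial u a ∈ J ↔ a = 0 := by
  refine ⟨fun h => ?_, fun h => by simp [h]⟩
  by_contra ha
  refine hJ u ?_
  simpa [C_mul_monomial, inv_mul_cancel₀ ha] using J.mul_mem_left (C a⁻¹) h

theorem IsMonomialFreeIdeal.one_lt_card_support (hJ : IsMonomialFreeIdeal J)
    {f : MvPolynomial σ k} (hf : f ∈ J) (hf0 : f ≠ 0) : 1 < f.support.card := by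
  refine lt_of_le_of_ne (Finset.card_pos.2 (support_nonempty.2 hf0)) fun h => hf0 ?_
  obtain ⟨u, hu⟩ := Finset.card_eq_one.1 h.symm
  have hfu : f = monomial u (coeff u f) := by
    conv_lhs => rw [f.as_sum, hu, Finset.sum_singleton]
  rw [hfu, monomial_eq_zero, ← hJ.monomial_mem_iff (u := u), ← hfu]
  exact hf

theorem IsMonomialFreeIdeal.exists_eq_C_mul_monomial_sub (hJ : IsMonomialFreeIdeal J)
    {f : MvPolynomial σ k} (hf : f ∈ J) (hf0 : f ≠ 0) (hcard : f.support.card ≤ 2) :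
    ∃ (u v : σ →₀ ℕ) (a c : k), a ≠ 0 ∧ c ≠ 0 ∧ f = C a * (monomial u 1 - monomial v c) := by
  classical
  obtain ⟨u, v, huv, hsupp⟩ :=
    Finset.card_eq_two.1 (hcard.antisymm (hJ.one_lt_card_support hf hf0))
  have hu : coeff u f ≠ 0 := mem_support_iff.1 (by simp [hsupp])
  have hv : coeff v f ≠ 0 := mem_support_iff.1 (by simp [hsupp])
  refine ⟨u, v, coeff u f, -(coeff v f / coeff u f), hu, neg_ne_zero.2 (div_ne_zero hv hu), ?_⟩
  conv_lhs => rw [f.as_sum, hsupp, Finset.sum_pair huv]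
  rw [mul_sub, C_mul_monomial, C_mul_monomial, mul_one, mul_neg, mul_div_cancel₀ _ hu, map_neg,
    sub_neg_eq_add]

theorem IsBinomialIdeal.eq_span_monomial_sub (hbin : IsBinomialIdeal J)
    (hJ : IsMonomialFreeIdeal J) :
    J = Ideal.span {f | f ∈ J ∧ ∃ (u v : σ →₀ ℕ) (c : k), c ≠ 0 ∧
      f = monomial u 1 - monomial v c} := by
  obtain ⟨S, rfl, hS⟩ := hbin
  refine le_antisymm (Ideal.span_le.2 fun f hf => ?_) (Ideal.span_le.2 fun f hf => hf.1)
  rcases eq_or_ne f 0 with rfl | hf0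
  · exact zero_mem _
  obtain ⟨u, v, a, c, ha, hc, hfeq⟩ :=
    hJ.exists_eq_C_mul_monomial_sub (Ideal.subset_span hf) hf0 (hS f hf)
  have hmem : monomial u 1 - monomial v c ∈ Ideal.span S := by
    rw [← Ideal.unit_mul_mem_iff_mem _ ((isUnit_iff_ne_zero.2 ha).map (C (σ := σ))), ← hfeq]
    exact Ideal.subset_span hf
  rw [hfeq]
  exact Ideal.mul_mem_left _ _ (Ideal.subset_span ⟨hmem, u, v, c, hc, rfl⟩)

/-- The lattice of exponent differences `u - v` of the binomials `x^u - c x^v` in `J`, where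
`c ≠ 0`. -/
def exponentLattice (J : Ideal (MvPolynomial σ k)) : Submodule ℤ (σ → ℤ) :=
  AddSubgroup.toIntSubmodule
    { carrier := {ℓ | ∃ (u v : σ →₀ ℕ) (c : k), c ≠ 0 ∧ (∀ j, ℓ j = u j - v j) ∧
        monomial u 1 - monomial v c ∈ J}
      zero_mem' := ⟨0, 0, 1, one_ne_zero, by simp, by simp⟩
      add_mem' := by
        rintro _ _ ⟨u, v, c, hc, hℓ, h⟩ ⟨u', v', c', hc', hℓ', h'⟩
        refine ⟨u + u', v + v', c * c', mul_ne_zero hc hc', fun j => ?_, ?_⟩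
        · simp only [Pi.add_apply, Finsupp.add_apply, hℓ, hℓ']
          push_cast
          ring
        · have hsum := add_mem (J.mul_mem_left (monomial u' 1) h) (J.mul_mem_left (monomial v c) h')
          simp only [mul_sub, monomial_mul, one_mul, mul_one] at hsum
          rwa [add_comm u' u, add_comm u' v, sub_add_sub_cancel] at hsum
      neg_mem' := by
        rintro _ ⟨u, v, c, hc, hℓ, h⟩
        refine ⟨v, u, c⁻¹, inv_ne_zero hc, fun j => by simp [hℓ], ?_⟩
        simpa [mul_sub, C_mul_monomial, hc, neg_add_eq_sub] using J.mul_mem_left (C (-c⁻¹)) h }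

theorem mem_exponentLattice {ℓ : σ → ℤ} :
    ℓ ∈ exponentLattice J ↔ ∃ (u v : σ →₀ ℕ) (c : k), c ≠ 0 ∧ (∀ j, ℓ j = u j - v j) ∧
      monomial u 1 - monomial v c ∈ J :=
  Iff.rfl

/-- The weights of the finest grading of `k[x]` for which the binomials in `J` are homogeneous:
the class of each coordinate vector modulo the exponent lattice. -/
def exponentWeight (J : Ideal (MvPolynomial σ k)) [DecidableEq σ] (j : σ) :
    (σ → ℤ) ⧸ exponentLattice J :=
  (exponentLattice J).mkQ (Pi.single j 1)

variable [DecidableEq σ]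

theorem span_range_exponentWeight [Finite σ] (J : Ideal (MvPolynomial σ k)) :
    Submodule.span ℤ (Set.range (exponentWeight J)) = ⊤ := by
  have hspan := congr_arg (Submodule.map (exponentLattice J).mkQ) (Pi.basisFun ℤ σ).span_eq
  rwa [Submodule.map_span, ← Set.range_comp, Submodule.map_top, Submodule.range_mkQ,
    show (exponentLattice J).mkQ ∘ Pi.basisFun ℤ σ = exponentWeight J from
      funext fun j => by simp [exponentWeight]] at hspan

theorem weight_exponentWeight (J : Ideal (MvPolynomial σ k)) (u : σ →₀ ℕ) :
    Finsupp.weight (exponentWeight J) u = (exponentLattice J).mkQ fun j => (u j : ℤ) := by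
  simp_rw [Finsupp.weight_apply, exponentWeight, ← map_nsmul, Finsupp.sum, ← map_sum]
  congr 1
  ext j
  simp +contextual [Finset.sum_apply, Pi.single_apply]

theorem weight_exponentWeight_eq_iff {u v : σ →₀ ℕ} :
    Finsupp.weight (exponentWeight J) u = Finsupp.weight (exponentWeight J) v ↔
      (fun j => (u j : ℤ) - v j) ∈ exponentLattice J := by
  rw [weight_exponentWeight, weight_exponentWeight, Submodule.mkQ_apply, Submodule.mkQ_apply,
    Submodule.Quotient.eq]
  rfl

attribute [local instance] MvPolynomial.weightedGradedAlgebra in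
theorem IsBinomialIdeal.isHomogeneous_exponentWeight (hbin : IsBinomialIdeal J)
    (hJ : IsMonomialFreeIdeal J) [DecidableEq ((σ → ℤ) ⧸ exponentLattice J)] :
    J.IsHomogeneous (weightedHomogeneousSubmodule k (exponentWeight J)) := by
  suffices h : ∀ f ∈ {f | f ∈ J ∧ ∃ (u v : σ →₀ ℕ) (c : k), c ≠ 0 ∧
      f = monomial u 1 - monomial v c},
      SetLike.IsHomogeneousElem (weightedHomogeneousSubmodule k (exponentWeight J)) f by
    have := Ideal.homogeneous_span _ _ h
    rwa [← hbin.eq_span_monomial_sub hJ] at this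
  rintro _ ⟨hf, u, v, c, hc, rfl⟩
  have huv : Finsupp.weight (exponentWeight J) v = Finsupp.weight (exponentWeight J) u :=
    (weight_exponentWeight_eq_iff.2 ⟨u, v, c, hc, fun _ => rfl, hf⟩).symm
  exact ⟨_, (isWeightedHomogeneous_monomial _ u 1 rfl).sub
    (isWeightedHomogeneous_monomial _ v c huv)⟩

theorem IsBinomialIdeal.eq_zero_of_injOn_weight (hbin : IsBinomialIdeal J)
    (hJ : IsMonomialFreeIdeal J) {f : MvPolynomial σ k} (hf : f ∈ J)
    (hinj : Set.InjOn (Finsupp.weight (exponentWeight J)) (f.support : Set (σ →₀ ℕ))) : f = 0 := by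
  classical
  by_contra hf0
  obtain ⟨u, hu⟩ := support_nonempty.2 hf0
  set m := Finsupp.weight (exponentWeight J) u with hm
  have hmem : weightedHomogeneousComponent (exponentWeight J) m f ∈ J :=
    weightedHomogeneousComponent_mem_of_mem k _ (hbin.isHomogeneous_exponentWeight hJ) hf m
  have hcomp : weightedHomogeneousComponent (exponentWeight J) m f = monomial u (coeff u f) := by
    rw [weightedHomogeneousComponent_apply, Finset.sum_eq_single_of_mem u (by simp [hu, hm])]
    intro v hv hvu
    rw [Finset.mem_filter] at hv
    exact absurd (hinj hv.1 hu hv.2) hvu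
  rw [hcomp, hJ.monomial_mem_iff] at hmem
  exact mem_support_iff.1 hu hmem

end BinomialIdeals

section PrimeBinomialIdeals

theorem exists_eq_smul_of_pow_eq_smul_pow {k A : Type*} [Field k] [IsAlgClosed k] [CommRing A]
    [IsDomain A] [Algebra k A] {a b : A} {c : k} {n : ℕ} (hn : n ≠ 0) (h : a ^ n = c • b ^ n) :
    ∃ r : k, a = r • b := by
  rcases eq_or_ne b 0 with rfl | hb
  · exact ⟨0, by simpa [hn] using h⟩
  let F := FractionRing A
  have hb' : algebraMap A F b ≠ 0 := by simpa using hb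
  have hpow : (algebraMap A F a / algebraMap A F b) ^ n = algebraMap k F c := by
    rw [div_pow, div_eq_iff (pow_ne_zero n hb'), ← map_pow, h, Algebra.smul_def, map_mul, map_pow,
      ← IsScalarTower.algebraMap_apply]
  have hint : IsIntegral k (algebraMap A F a / algebraMap A F b) :=
    .of_pow (Nat.pos_of_ne_zero hn) (hpow ▸ isIntegral_algebraMap)
  obtain ⟨r, hr⟩ := minpoly.mem_range_of_degree_eq_one k _
    (IsAlgClosed.degree_eq_one_of_irreducible k (minpoly.irreducible hint))
  refine ⟨r, IsFractionRing.injective A F ?_⟩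
  rw [← (eq_div_iff hb').1 hr, Algebra.smul_def, map_mul, ← IsScalarTower.algebraMap_apply]

variable {σ k : Type*} [Finite σ]

/-- The componentwise positive part `ℓ⁺` of an integer vector, as a monomial exponent; the negative
part `ℓ⁻` is the positive part of `-ℓ`. -/
noncomputable def exponentPosPart (ℓ : σ → ℤ) : σ →₀ ℕ :=
  Finsupp.equivFunOnFinite.symm fun j => (ℓ j).toNat

theorem exponentPosPart_apply (ℓ : σ → ℤ) (j : σ) : exponentPosPart ℓ j = (ℓ j).toNat :=
  rfl

theorem exponentPosPart_nsmul (n : ℕ) (ℓ : σ → ℤ) :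
    exponentPosPart (n • ℓ) = n • exponentPosPart ℓ := by
  ext j
  have h := mul_max_of_nonneg (ℓ j) 0 n.cast_nonneg
  zify
  simpa [exponentPosPart_apply] using h.symm

variable [Field k]

/-- The binomial `x^{ℓ⁺} - c x^{ℓ⁻}` attached to an integer vector `ℓ`; the coefficient `c` may be
zero. -/
noncomputable def latticeBinomial (ℓ : σ → ℤ) (c : k) : MvPolynomial σ k :=
  monomial (exponentPosPart ℓ) 1 - monomial (exponentPosPart (-ℓ)) c

theorem exists_monomial_sub_eq_mul_latticeBinomial {ℓ : σ → ℤ} {u v : σ →₀ ℕ}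
    (hℓ : ∀ j, ℓ j = u j - v j) (c : k) :
    ∃ t : σ →₀ ℕ, monomial u 1 - monomial v c = monomial t 1 * latticeBinomial ℓ c := by
  refine ⟨u - exponentPosPart ℓ, ?_⟩
  have hu : u - exponentPosPart ℓ + exponentPosPart ℓ = u := by
    ext j
    simp only [Finsupp.add_apply, Finsupp.tsub_apply, exponentPosPart_apply, hℓ]
    omega
  have hv : u - exponentPosPart ℓ + exponentPosPart (-ℓ) = v := by
    ext j
    simp only [Finsupp.add_apply, Finsupp.tsub_apply, exponentPosPart_apply, Pi.neg_apply, hℓ]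
    omega
  rw [latticeBinomial, mul_sub, monomial_mul, monomial_mul, hu, hv, one_mul, one_mul]

theorem latticeBinomial_nsmul (n : ℕ) (ℓ : σ → ℤ) (c : k) :
    latticeBinomial (n • ℓ) c =
      monomial (exponentPosPart ℓ) 1 ^ n - c • monomial (exponentPosPart (-ℓ)) 1 ^ n := by
  rw [latticeBinomial, ← smul_neg, exponentPosPart_nsmul, exponentPosPart_nsmul, monomial_pow,
    monomial_pow, one_pow, smul_monomial, smul_eq_mul, mul_one]

variable {J : Ideal (MvPolynomial σ k)}

theorem IsMonomialFreeIdeal.ne_zero_of_latticeBinomial_mem (hJ : IsMonomialFreeIdeal J) {ℓ : σ → ℤ}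
    {c : k} (h : latticeBinomial ℓ c ∈ J) : c ≠ 0 := by
  rintro rfl
  exact hJ _ (by simpa [latticeBinomial] using h)

theorem IsMonomialFreeIdeal.latticeBinomial_mem_unique (hJ : IsMonomialFreeIdeal J) {ℓ : σ → ℤ}
    {c c' : k} (h : latticeBinomial ℓ c ∈ J) (h' : latticeBinomial ℓ c' ∈ J) : c = c' := by
  have hdiff : monomial (exponentPosPart (-ℓ)) (c' - c) ∈ J := by
    simpa [latticeBinomial] using sub_mem h h'
  exact (sub_eq_zero.1 (hJ.monomial_mem_iff.1 hdiff)).symm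

variable [hprime : J.IsPrime]

theorem IsMonomialFreeIdeal.monomial_sub_mem_iff (hJ : IsMonomialFreeIdeal J) {ℓ : σ → ℤ}
    {u v : σ →₀ ℕ} (hℓ : ∀ j, ℓ j = u j - v j) {c : k} :
    monomial u 1 - monomial v c ∈ J ↔ latticeBinomial ℓ c ∈ J := by
  obtain ⟨t, ht⟩ := exists_monomial_sub_eq_mul_latticeBinomial hℓ c
  rw [ht, hprime.mul_mem_iff_mem_or_mem, or_iff_right (hJ t)]

theorem IsMonomialFreeIdeal.mem_exponentLattice_iff_latticeBinomial_mem
    (hJ : IsMonomialFreeIdeal J) {ℓ : σ → ℤ} :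
    ℓ ∈ exponentLattice J ↔ ∃ c : k, latticeBinomial ℓ c ∈ J := by
  constructor
  · intro h
    obtain ⟨u, v, c, -, hℓ, hc⟩ := mem_exponentLattice.1 h
    exact ⟨c, (hJ.monomial_sub_mem_iff hℓ).1 hc⟩
  · rintro ⟨c, h⟩
    refine mem_exponentLattice.2 ⟨_, _, c, hJ.ne_zero_of_latticeBinomial_mem h, fun j => ?_, h⟩
    exact (Int.toNat_sub_toNat_neg (ℓ j)).symm

theorem IsMonomialFreeIdeal.nsmul_mem_exponentLattice_iff [IsAlgClosed k]
    (hJ : IsMonomialFreeIdeal J) {n : ℕ} (hn : n ≠ 0) {ℓ : σ → ℤ} :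
    n • ℓ ∈ exponentLattice J ↔ ℓ ∈ exponentLattice J := by
  refine ⟨fun h => ?_, fun h => nsmul_mem h n⟩
  rw [hJ.mem_exponentLattice_iff_latticeBinomial_mem] at h ⊢
  obtain ⟨c, hc⟩ := h
  rw [latticeBinomial_nsmul, ← Ideal.Quotient.mk_eq_mk_iff_sub_mem, map_pow,
    ← Ideal.Quotient.mkₐ_eq_mk k, map_smul, map_pow] at hc
  obtain ⟨r, hr⟩ := exists_eq_smul_of_pow_eq_smul_pow hn hc
  refine ⟨r, ?_⟩
  rwa [← map_smul, Ideal.Quotient.mkₐ_eq_mk, Ideal.Quotient.mk_eq_mk_iff_sub_mem, smul_monomial,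
    smul_eq_mul, mul_one] at hr

theorem IsMonomialFreeIdeal.isTorsionFree_quotient_exponentLattice [IsAlgClosed k]
    (hJ : IsMonomialFreeIdeal J) : Module.IsTorsionFree ℤ ((σ → ℤ) ⧸ exponentLattice J) := by
  refine Module.isTorsionFree_int_iff_isAddTorsionFree.2 ⟨fun n hn => ?_⟩
  refine (injective_iff_map_eq_zero (DistribSMul.toAddMonoidHom _ n)).2 fun m hm => ?_
  induction m using Submodule.Quotient.induction_on with | H ℓ => ?_
  rw [DistribSMul.toAddMonoidHom_apply, ← Submodule.Quotient.mk_smul,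
    Submodule.Quotient.mk_eq_zero] at hm
  exact (Submodule.Quotient.mk_eq_zero _).2 ((hJ.nsmul_mem_exponentLattice_iff hn).1 hm)

theorem IsBinomialIdeal.exists_eq_span_latticeBinomial (hbin : IsBinomialIdeal J)
    (hJ : IsMonomialFreeIdeal J) :
    ∃ c : (σ → ℤ) → k, (∀ ℓ ∈ exponentLattice J, c ℓ ≠ 0) ∧
      J = Ideal.span {f | ∃ ℓ ∈ exponentLattice J, f = latticeBinomial ℓ (c ℓ)} := by
  choose! c hc using fun (ℓ : σ → ℤ) (hℓ : ℓ ∈ exponentLattice J) =>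
    hJ.mem_exponentLattice_iff_latticeBinomial_mem.1 hℓ
  refine ⟨c, fun ℓ hℓ => hJ.ne_zero_of_latticeBinomial_mem (hc ℓ hℓ), le_antisymm ?_ ?_⟩
  · conv_lhs => rw [hbin.eq_span_monomial_sub hJ]
    rw [Ideal.span_le]
    rintro _ ⟨h, u, v, a, ha, rfl⟩
    set ℓ : σ → ℤ := fun j => u j - v j
    have hmem : ℓ ∈ exponentLattice J := ⟨u, v, a, ha, fun _ => rfl, h⟩
    obtain ⟨t, ht⟩ := exists_monomial_sub_eq_mul_latticeBinomial (ℓ := ℓ) (fun _ => rfl) a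
    have hac : a = c ℓ := hJ.latticeBinomial_mem_unique
      ((hJ.monomial_sub_mem_iff fun _ => rfl).1 h) (hc ℓ hmem)
    rw [ht, hac]
    exact Ideal.mul_mem_left _ _ (Ideal.subset_span ⟨ℓ, hmem, rfl⟩)
  · rw [Ideal.span_le]
    rintro _ ⟨ℓ, hℓ, rfl⟩
    exact hc ℓ hℓ

end PrimeBinomialIdeals

section InitialForms

variable {N : ℕ}

theorem initialForm_eq_sum_filter (w : Fin N → ℝ) (f : MvPolynomial (Fin N) ℂ)
    [DecidablePred fun u => ∀ v ∈ f.support, wt w u ≤ wt w v] :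
    initialForm w f =
      ∑ u ∈ f.support with ∀ v ∈ f.support, wt w u ≤ wt w v, monomial u (coeff u f) := by
  rw [initialForm, Finset.sum_filter]
  congr!

theorem mem_support_initialForm {w : Fin N → ℝ} {f : MvPolynomial (Fin N) ℂ} {u : Fin N →₀ ℕ} :
    u ∈ (initialForm w f).support ↔ u ∈ f.support ∧ ∀ v ∈ f.support, wt w u ≤ wt w v := by
  classical
  rw [mem_support_iff, initialForm_eq_sum_filter, coeff_sum]
  simp_rw [coeff_monomial]
  rw [Finset.sum_ite_eq']
  simp +contextual

theorem support_initialForm_subset (w : Fin N → ℝ) (f : MvPolynomial (Fin N) ℂ) :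
    (initialForm w f).support ⊆ f.support := fun _ hu =>
  (mem_support_initialForm.1 hu).1

theorem initialForm_ne_zero (w : Fin N → ℝ) {f : MvPolynomial (Fin N) ℂ} (hf : f ≠ 0) :
    initialForm w f ≠ 0 := by
  obtain ⟨u, hu, hmin⟩ := f.support.exists_min_image (wt w) (support_nonempty.2 hf)
  exact support_nonempty.1 ⟨u, mem_support_initialForm.2 ⟨hu, hmin⟩⟩

theorem initialForm_mem_initialIdeal (w : Fin N → ℝ) {I : Ideal (MvPolynomial (Fin N) ℂ)}
    {f : MvPolynomial (Fin N) ℂ} (hf : f ∈ I) : initialForm w f ∈ initialIdeal w I := by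
  rcases eq_or_ne f 0 with rfl | hf0
  · simp [initialForm]
  · exact Ideal.subset_span ⟨f, hf, hf0, rfl⟩

variable {J : Ideal (MvPolynomial (Fin N) ℂ)}

theorem IsMonomialFreeIdeal.wt_eq_wt_of_mem (hJ : IsMonomialFreeIdeal J) {w : Fin N → ℝ}
    (hw : initialIdeal w J ≤ J) {f : MvPolynomial (Fin N) ℂ} (hf : f ∈ J)
    (hcard : f.support.card ≤ 2) {u v : Fin N →₀ ℕ} (hu : u ∈ f.support) (hv : v ∈ f.support) :
    wt w u = wt w v := by
  have hf0 : f ≠ 0 := support_nonempty.1 ⟨u, hu⟩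
  have hinit := hJ.one_lt_card_support (hw (initialForm_mem_initialIdeal w hf))
    (initialForm_ne_zero w hf0)
  have hsupp : (initialForm w f).support = f.support :=
    Finset.eq_of_subset_of_card_le (support_initialForm_subset w f) (hcard.trans hinit)
  rw [← hsupp, mem_support_initialForm] at hu hv
  exact le_antisymm (hu.2 v hv.1) (hv.2 u hu.1)

theorem IsMonomialFreeIdeal.exponentLattice_le_ker_mulVecLin (hJ : IsMonomialFreeIdeal J)
    {m : Type*} {W : Matrix m (Fin N) ℤ}
    (hW : ∀ i, initialIdeal (fun j => (W i j : ℝ)) J ≤ J) :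
    exponentLattice J ≤ LinearMap.ker W.mulVecLin := by
  classical
  intro ℓ hmem
  obtain ⟨u, v, c, hc, hℓ, h⟩ := mem_exponentLattice.1 hmem
  rw [LinearMap.mem_ker, Matrix.mulVecLin_apply]
  ext i
  have hwt : wt (fun j => (W i j : ℝ)) u = wt (fun j => (W i j : ℝ)) v := by
    rcases eq_or_ne u v with rfl | huv
    · rfl
    have hsupp : (monomial u (1 : ℂ) - monomial v c).support = {u, v} := by
      ext a
      simp only [mem_support_iff, coeff_sub, coeff_monomial, Finset.mem_insert,
        Finset.mem_singleton]
      grind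
    exact hJ.wt_eq_wt_of_mem (hW i) h (hsupp ▸ Finset.card_le_two) (by simp [hsupp])
      (by simp [hsupp])
  have hsum : ∑ j, W i j * (u j : ℤ) = ∑ j, W i j * (v j : ℤ) := by
    simp only [wt] at hwt
    exact_mod_cast hwt
  simp [Matrix.mulVec, dotProduct, hℓ, mul_sub, hsum]

end InitialForms

section ExponentLatticeOfInitialIdeal

variable {N : ℕ} {I : Ideal (MvPolynomial (Fin N) ℂ)} {w : Fin N → ℝ}

theorem injective_mkₐ_comp_rename_of_linearIndepOn (hbin : IsBinomialIdeal (initialIdeal w I))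
    (hmon : IsMonomialFreeIdeal (initialIdeal w I)) {s : Set (Fin N)}
    (hs : LinearIndepOn ℤ (exponentWeight (initialIdeal w I)) s) :
    Function.Injective ((Ideal.Quotient.mkₐ ℂ I).comp (rename ((↑) : s → Fin N))) := by
  classical
  refine (injective_iff_map_eq_zero _).2 fun g hg => ?_
  by_contra hg0
  set f := rename ((↑) : s → Fin N) g with hf
  have hfI : f ∈ I := Ideal.Quotient.eq_zero_iff_mem.1 hg
  have hf0 : f ≠ 0 := (map_ne_zero_iff _ (rename_injective _ Subtype.val_injective)).2 hg0
  refine initialForm_ne_zero w hf0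
    (hbin.eq_zero_of_injOn_weight hmon (initialForm_mem_initialIdeal w hfI) ?_)
  refine Set.InjOn.mono (support_initialForm_subset w f) ?_
  rw [hf, support_rename_of_injective Subtype.val_injective, Finset.coe_image]
  exact ((injective_weight_of_linearIndepOn hs).injOn).image_of_comp

theorem finrank_quotient_exponentLattice_le_ringKrullDim
    (hbin : IsBinomialIdeal (initialIdeal w I)) (hmon : IsMonomialFreeIdeal (initialIdeal w I)) :
    (Module.finrank ℤ ((Fin N → ℤ) ⧸ exponentLattice (initialIdeal w I)) : WithBot ℕ∞) ≤
      ringKrullDim (MvPolynomial (Fin N) ℂ ⧸ I) := by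
  obtain ⟨s, hs, hcard⟩ := exists_linearIndepOn_and_finrank_eq_card
    (span_range_exponentWeight (initialIdeal w I))
  rw [hcard]
  exact card_le_ringKrullDim_of_injective
    (injective_mkₐ_comp_rename_of_linearIndepOn hbin hmon hs)

theorem ker_mulVecLin_eq_exponentLattice (hbin : IsBinomialIdeal (initialIdeal w I))
    (hmon : IsMonomialFreeIdeal (initialIdeal w I)) [(initialIdeal w I).IsPrime] {m : Type*}
    [Fintype m] (hdim : ringKrullDim (MvPolynomial (Fin N) ℂ ⧸ I) ≤ (Fintype.card m : ℕ))
    {W : Matrix m (Fin N) ℤ} (hW : LinearIndependent ℤ W.row)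
    (hgrad : ∀ i, initialIdeal (fun j => (W i j : ℝ)) (initialIdeal w I) ≤ initialIdeal w I) :
    LinearMap.ker W.mulVecLin = exponentLattice (initialIdeal w I) := by
  have := hmon.isTorsionFree_quotient_exponentLattice
  refine ker_eq_of_finrank_quotient_le (hmon.exponentLattice_le_ker_mulVecLin hgrad) ?_
  refine le_trans ?_ (card_le_rank_of_linearIndependent_row hW)
  exact_mod_cast (finrank_quotient_exponentLattice_le_ringKrullDim hbin hmon).trans hdim

end ExponentLatticeOfInitialIdeal

theorem initialIdeal_eq_lattice_ideal_general (N d : ℕ) (I : Ideal (MvPolynomial (Fin N) ℂ))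
    (hdim : ringKrullDim (MvPolynomial (Fin N) ℂ ⧸ I) ≤ (d : ℕ))
    (W : Fin d → Fin N → ℤ) (hW : LinearIndependent ℤ W)
    (J : Ideal (MvPolynomial (Fin N) ℂ)) (hJ : ∃ w : Fin N → ℝ, J = initialIdeal w I)
    (hJW : ∀ i : Fin d, initialIdeal (fun j => (W i j : ℝ)) J ≤ J)
    (hprime : J.IsPrime) (hbin : IsBinomialIdeal J) (hnomon : IsMonomialFreeIdeal J) :
    ∃ c : (Fin N → ℤ) → ℂ,
      (∀ ℓ : Fin N → ℤ, (∀ i : Fin d, ∑ j, W i j * ℓ j = 0) → c ℓ ≠ 0) ∧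
      J = Ideal.span {g | ∃ ℓ : Fin N → ℤ,
        (∀ i : Fin d, ∑ j, W i j * ℓ j = 0) ∧ g = latticeBinomial ℓ (c ℓ)} := by
  obtain ⟨w, rfl⟩ := hJ
  have hker := ker_mulVecLin_eq_exponentLattice hbin hnomon (by simpa using hdim)
    (W := Matrix.of W) hW hJW
  have hmem (ℓ : Fin N → ℤ) :
      ℓ ∈ exponentLattice (initialIdeal w I) ↔ ∀ i, ∑ j, W i j * ℓ j = 0 := by
    rw [← hker, LinearMap.mem_ker, Matrix.mulVecLin_apply, funext_iff]
    rfl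
  simpa only [hmem] using hbin.exists_eq_span_latticeBinomial hnomon

/-- If `J = init_w(I)` is a binomial prime ideal with no monomials that is homogeneous with
respect to the grading given by a matrix `W` with linearly independent rows `w_1, …, w_d`
(`d` the Krull dimension of `S/I`), then `J` is the lattice ideal
`⟨x^{ℓ⁺} − c_ℓ x^{ℓ⁻} : ℓ ∈ L⟩` for the lattice `L = ker W` and suitable nonzero
constants `c_ℓ`. -/
theorem initialIdeal_eq_lattice_ideal
    (n d : ℕ) (I : Ideal (MvPolynomial (Fin (n + 1)) ℂ))
    (hhom : ∀ f ∈ I, ∀ k : ℕ, MvPolynomial.homogeneousComponent k f ∈ I)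
    (hdim : ringKrullDim (MvPolynomial (Fin (n + 1)) ℂ ⧸ I) = (d : ℕ))
    (W : Fin d → Fin (n + 1) → ℤ) (hW : LinearIndependent ℤ W)
    (J : Ideal (MvPolynomial (Fin (n + 1)) ℂ))
    (hJ : ∃ w : Fin (n + 1) → ℝ, J = initialIdeal w I)
    (hJW : ∀ i : Fin d, initialIdeal (fun j => (W i j : ℝ)) J = J)
    (hprime : J.IsPrime)
    (hbin : ∃ S : Set (MvPolynomial (Fin (n + 1)) ℂ),
      J = Ideal.span S ∧ ∀ f ∈ S, f.support.card ≤ 2)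
    (hnomon : ∀ u : Fin (n + 1) →₀ ℕ, monomial u (1 : ℂ) ∉ J) :
    ∃ c : (Fin (n + 1) → ℤ) → ℂ,
      (∀ ℓ : Fin (n + 1) → ℤ, (∀ i : Fin d, ∑ j, W i j * ℓ j = 0) → c ℓ ≠ 0) ∧
      J = Ideal.span {g | ∃ ℓ : Fin (n + 1) → ℤ,
        (∀ i : Fin d, ∑ j, W i j * ℓ j = 0) ∧
        g = monomial (Finsupp.equivFunOnFinite.symm fun j => (ℓ j).toNat) (1 : ℂ)
          - monomial (Finsupp.equivFunOnFinite.symm fun j => (-ℓ j).toNat) (c ℓ)} := by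
  exact initialIdeal_eq_lattice_ideal_general (n + 1) d I hdim.le W hW J hJ
    (fun i => (hJW i).le) hprime hbin hnomon
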